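/- arXiv:2605.26237 — 5 statements merged into one kernel-verified Lean document; each statement's English description precedes it below -/
import Mathlib

section
/- Let α = Σα_iσ_i and β = Σβ_iσ_i be elements of A¹. (a) If α∧β = 0 in A²_{W,k}, then the resonance condition for (α,β) holds at every branch δ ∈ Δ_P of every point P ∈ S. (b) Conversely, if p ∤ d_i for every i ∈ C and the resonance condition for (α,β) holds at every branch of every point of S, then α∧β = 0 in A²_{W,k}. -/
/-!
At each point `P` the relations spanning `I_P` are exactly those killed by the boundary map
`∂ : Λ² A_P → A_P`, `ψ^δ ∧ ψ^δ' ↦ ψ^δ' - ψ^δ` (unless all branches at `P` lie on one component,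
in which case every multiplicity entering the product, and hence everything at stake, vanishes).
The `ψ^γ`-coordinate of `∂` applied to the `P`-component of `α ∧ β` is exactly the left-hand side
of the resonance condition at `γ` (`sum_sum_smul_sub`, using the symmetry of the multiplicities).

For (a), the coordinates of `∂` descend to `Λ² A_P / I_P` (`bdry_eq_zero_of_mem`), so `α ∧ β = 0`
forces the resonance conditions. For (b), fix a branch `δ₀` at `P`; the three-term relation reads
`[ψ^δ ∧ ψ^δ'] = [ψ^δ₀ ∧ ψ^δ'] - [ψ^δ₀ ∧ ψ^δ]` (`mk_psiW_eq_sub`), and the same summation identity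
writes the `P`-component of `α ∧ β` as a combination of the `[ψ^δ₀ ∧ ψ^γ]` whose coefficients are
the resonance expressions. The summand `A^{2,∞}` is zero when no degree is divisible by `p`.
-/

open scoped Classical

/-- The weak combinatorial type of a plane projective curve. -/
structure WeakComb (p : ℕ) where
  /-- the set of irreducible components -/
  C : Type
  [fintypeC : Fintype C]
  [decEqC : DecidableEq C]
  [nonemptyC : Nonempty C]
  /-- the set of singular points -/
  S : Type
  [fintypeS : Fintype S]
  [decEqS : DecidableEq S]
  /-- the local branches at each singular point -/
  Δ : S → Type
  [fintypeΔ : ∀ P, Fintype (Δ P)]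
  [decEqΔ : ∀ P, DecidableEq (Δ P)]
  /-- each branch belongs to a component -/
  φ : ∀ P, Δ P → C
  /-- local intersection multiplicities of pairs of branches -/
  μ : ∀ P, Δ P → Δ P → ℕ
  μ_symm : ∀ P δ δ', φ P δ ≠ φ P δ' → μ P δ δ' = μ P δ' δ
  μ_pos : ∀ P δ δ', φ P δ ≠ φ P δ' → 0 < μ P δ δ'

attribute [instance] WeakComb.fintypeC WeakComb.decEqC WeakComb.nonemptyC
attribute [instance] WeakComb.fintypeS WeakComb.decEqS WeakComb.fintypeΔ WeakComb.decEqΔ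

namespace WeakComb

variable {p : ℕ} (W : WeakComb p)

/-- μ_P(δ,δ') with the convention that it vanishes on pairs of branches of the same component. -/
def muk (P : W.S) (δ δ' : W.Δ P) : ℕ :=
  if W.φ P δ = W.φ P δ' then 0 else W.μ P δ δ'

/-- μ_P(δ, j): the multiplicity of intersection of the branch δ with the component j. -/
def muC (P : W.S) (δ : W.Δ P) (j : W.C) : ℕ :=
  ∑ δ' : W.Δ P, if W.φ P δ' = j then W.muk P δ δ' else 0

/-- A degree assignment: positive degrees satisfying the Bezout condition. -/
def IsDegree (d : W.C → ℕ) : Prop :=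
  (∀ i, 0 < d i) ∧
  ∀ i j, i ≠ j →
    d i * d j = ∑ P : W.S, ∑ δ : W.Δ P, if W.φ P δ = i then W.muC P δ j else 0

/-- The basis vector σ_i of A¹ = (C → ZMod p). -/
noncomputable def sigma (i : W.C) : W.C → ZMod p := Pi.single i 1

/-- The basis vector ψ_P^δ of A_P = (Δ_P → ZMod p). -/
noncomputable def psi (P : W.S) (δ : W.Δ P) : W.Δ P → ZMod p := Pi.single δ 1

/-- ψ_P^δ ∧ ψ_P^δ' as an element of Λ² A_P. -/
noncomputable def psiW (P : W.S) (δ δ' : W.Δ P) : ⋀[ZMod p]^2 (W.Δ P → ZMod p) :=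
  ⟨ExteriorAlgebra.ιMulti (ZMod p) 2 ![W.psi P δ, W.psi P δ'],
   ExteriorAlgebra.ιMulti_range (ZMod p) 2 (Set.mem_range_self _)⟩

/-- The subspace I_P of Λ² A_P. -/
noncomputable def IP (P : W.S) : Submodule (ZMod p) (⋀[ZMod p]^2 (W.Δ P → ZMod p)) :=
  Submodule.span (ZMod p)
    ({x | ∃ δ1 δ2 δ3 : W.Δ P, x = W.psiW P δ1 δ2 + W.psiW P δ2 δ3 + W.psiW P δ3 δ1} ∪
     {x | (∀ δ δ' : W.Δ P, W.φ P δ = W.φ P δ') ∧ ∃ δ1 δ2 : W.Δ P, x = W.psiW P δ1 δ2})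

/-- The degree-two part A² = A^{2,0} ⊕ A^{2,∞} of the Combinatorial Aomoto algebra. -/
abbrev A2 (d : W.C → ℕ) : Type :=
  ((P : W.S) → (⋀[ZMod p]^2 (W.Δ P → ZMod p)) ⧸ W.IP P) ×
  ({i : W.C // p ∣ d i} → ZMod p)

/-- The wedge product A¹ × A¹ → A², extending σ_i ∧ σ_j bilinearly. -/
noncomputable def wedge (d : W.C → ℕ) (α β : W.C → ZMod p) : W.A2 d :=
  (fun P => ∑ δ : W.Δ P, ∑ δ' : W.Δ P,
      (α (W.φ P δ) * β (W.φ P δ') * (W.muk P δ δ' : ZMod p)) •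
        Submodule.Quotient.mk (W.psiW P δ δ'),
   fun i => α i.1 * (∑ j : W.C, (d j : ZMod p) * β j)
          - β i.1 * (∑ j : W.C, (d j : ZMod p) * α j))

/-- The linear map ·∧α : A¹ → A², β ↦ β ∧ α. -/
noncomputable def wedgeL (d : W.C → ℕ) (α : W.C → ZMod p) :
    (W.C → ZMod p) →ₗ[ZMod p] W.A2 d where
  toFun β := W.wedge d β α
  map_add' β γ := by
    refine Prod.ext ?_ ?_
    · funext P
      simp only [wedge, Pi.add_apply, Prod.fst_add]
      rw [← Finset.sum_add_distrib]
      refine Finset.sum_congr rfl fun δ _ => ?_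
      rw [← Finset.sum_add_distrib]
      refine Finset.sum_congr rfl fun δ' _ => ?_
      rw [← add_smul, add_mul, add_mul]
    · funext i
      simp only [wedge, Pi.add_apply, Prod.snd_add]
      rw [show (∑ x : W.C, (d x : ZMod p) * (β x + γ x))
            = (∑ x : W.C, (d x : ZMod p) * β x) + ∑ x : W.C, (d x : ZMod p) * γ x by
        rw [← Finset.sum_add_distrib]; exact Finset.sum_congr rfl fun x _ => by ring]
      ring
  map_smul' c β := by
    refine Prod.ext ?_ ?_
    · funext P
      simp only [wedge, Pi.smul_apply, smul_eq_mul, RingHom.id_apply, Prod.smul_fst]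
      rw [Finset.smul_sum]
      refine Finset.sum_congr rfl fun δ _ => ?_
      rw [Finset.smul_sum]
      refine Finset.sum_congr rfl fun δ' _ => ?_
      rw [smul_smul]
      ring_nf
    · funext i
      simp only [wedge, Pi.smul_apply, smul_eq_mul, RingHom.id_apply, Prod.smul_snd]
      rw [show (∑ x : W.C, (d x : ZMod p) * (c * β x)) = c * ∑ x : W.C, (d x : ZMod p) * β x by
        rw [Finset.mul_sum]; exact Finset.sum_congr rfl fun x _ => by ring]
      ring

/-- The kernel of ·∧α : A¹ → A². -/
noncomputable def wedgeKer (d : W.C → ℕ) (α : W.C → ZMod p) :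
    Submodule (ZMod p) (W.C → ZMod p) :=
  LinearMap.ker (W.wedgeL d α)

/-- H¹ of the Combinatorial Aomoto complex with differential ·∧α. -/
noncomputable abbrev H1 (d : W.C → ℕ) (α : W.C → ZMod p) :=
  (W.wedgeKer d α) ⧸
    (Submodule.comap (W.wedgeKer d α).subtype (Submodule.span (ZMod p) {α}))

end WeakComb

namespace WeakComb

variable {p : ℕ} (W : WeakComb p)

/-- The resonance condition for (α,β) at the branch δ of the point P. -/
def ResCond (α β : W.C → ZMod p) (P : W.S) (δ : W.Δ P) : Prop :=
  β (W.φ P δ) * (∑ j : W.C, (W.muC P δ j : ZMod p) * α j)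
    - α (W.φ P δ) * (∑ j : W.C, (W.muC P δ j : ZMod p) * β j) = 0

/-- P is a p-transversal point for the pair of components i ≠ j. -/
def PTransPoint (P : W.S) (i j : W.C) : Prop :=
  i ≠ j ∧ (∀ δ : W.Δ P, W.φ P δ = i ∨ W.φ P δ = j) ∧
  (∃ δ : W.Δ P, W.φ P δ = i) ∧ (∃ δ : W.Δ P, W.φ P δ = j) ∧
  ((∃ δ : W.Δ P, W.φ P δ = i ∧ ((W.muC P δ j : ZMod p) ≠ 0)) ∨
   (∃ δ : W.Δ P, W.φ P δ = j ∧ ((W.muC P δ i : ZMod p) ≠ 0)))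

/-- The components i and j are p-transversal at a point. -/
def PTransComponents (i j : W.C) : Prop := ∃ P : W.S, W.PTransPoint P i j

/-- α is non-coordinate if all its coordinates are nonzero. -/
def NonCoordinate (α : W.C → ZMod p) : Prop := ∀ i, α i ≠ 0

end WeakComb

/-- The setoid (partition) obtained from s by merging the classes of c₀ and c₁. -/
def mergeSetoid {α : Type*} (s : Setoid α) (c₀ c₁ : α) : Setoid α :=
  Relation.EqvGen.setoid (fun a b => s.r a b ∨ (a = c₀ ∧ b = c₁))

namespace WeakComb

variable {p : ℕ} (W : WeakComb p)

/-- W is p-transversal at P with respect to (α, π), where the surjection π is encoded by the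
setoid s of its fibres; the two classes π(φ_P(Δ_P)) = {i',j'} are those of c₀ and c₁. -/
def PTransversalAt (α : W.C → ZMod p) (s : Setoid W.C) (P : W.S) (c₀ c₁ : W.C) : Prop :=
  ¬ s.r c₀ c₁ ∧
  (∀ δ : W.Δ P, s.r (W.φ P δ) c₀ ∨ s.r (W.φ P δ) c₁) ∧
  (∃ δ : W.Δ P, s.r (W.φ P δ) c₀) ∧ (∃ δ : W.Δ P, s.r (W.φ P δ) c₁) ∧
  ∃ δ : W.Δ P, s.r (W.φ P δ) c₀ ∧
    (∑ δ' : W.Δ P, if s.r (W.φ P δ') c₁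
        then (W.muk P δ δ' : ZMod p) * α (W.φ P δ') else 0) ≠ 0

/-- A p-reduction step with respect to α. -/
def RedStep (α : W.C → ZMod p) (s s' : Setoid W.C) : Prop :=
  ∃ (P : W.S) (c₀ c₁ : W.C), W.PTransversalAt α s P c₀ c₁ ∧ s' = mergeSetoid s c₀ c₁

/-- W is completely p-reductive with respect to α: starting from the identity partition (⊥),
some finite sequence of p-reduction steps reaches the one-class partition (⊤). -/
def CompletelyPReductive (α : W.C → ZMod p) : Prop :=
  Relation.ReflTransGen (W.RedStep α) ⊥ ⊤

/-- β is π-proportional to α, for the surjection π encoded by the setoid s: on each class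
of s, β is a scalar multiple of α. -/
def Proportional (s : Setoid W.C) (α β : W.C → ZMod p) : Prop :=
  ∀ c : W.C, ∃ l : ZMod p, ∀ c', s.r c c' → β c' = l * α c'

end WeakComb

/-- A combinatorial quasi-fiber structure of rank r on W. -/
structure QuasiFiber {p : ℕ} (W : WeakComb p) (r : ℕ) where
  /-- which quasi-fiber each component belongs to -/
  g : W.C → Fin r
  g_surj : Function.Surjective g
  /-- multiplicities of components inside the quasi-fibers -/
  m : W.C → ℕ
  m_pos : ∀ c, 0 < m c
  /-- the set of base points -/
  B : Set W.S
  fiber_off_base : ∀ P : W.S, P ∉ B → ∀ δ δ' : W.Δ P, g (W.φ P δ) = g (W.φ P δ')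

namespace WeakComb

variable {p : ℕ} (W : WeakComb p) {r : ℕ}

/-- M_s(δ) for a branch δ at a base point P. -/
noncomputable def Mcoef (F : QuasiFiber W r) (P : W.S) (δ : W.Δ P) (s : Fin r) : ZMod p :=
  ∑ δ' : W.Δ P,
    if W.φ P δ' ≠ W.φ P δ ∧ F.g (W.φ P δ') = s
      then ((F.m (W.φ P δ') * W.μ P δ δ' : ℕ) : ZMod p) else 0

/-- ω_a = Σ_c m_c · a_{g(c)} · σ_c ∈ A¹. -/
noncomputable def omega (F : QuasiFiber W r) (a : Fin r → ZMod p) : W.C → ZMod p :=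
  fun c => (F.m c : ZMod p) * a (F.g c)

/-- The restricted combinatorics W°_s of the quasi-fiber s. -/
noncomputable def restrict (F : QuasiFiber W r) (s : Fin r) : WeakComb p where
  C := {c : W.C // F.g c = s}
  fintypeC := Fintype.ofFinite _
  decEqC := inferInstance
  nonemptyC := by obtain ⟨c, hc⟩ := F.g_surj s; exact ⟨⟨c, hc⟩⟩
  S := {P : W.S // Nonempty (W.Δ P) ∧ ∀ δ : W.Δ P, F.g (W.φ P δ) = s}
  fintypeS := Fintype.ofFinite _
  decEqS := inferInstance
  Δ := fun P => W.Δ P.1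
  fintypeΔ := fun P => inferInstance
  decEqΔ := fun P => inferInstance
  φ := fun P δ => ⟨W.φ P.1 δ, P.2.2 δ⟩
  μ := fun P δ δ' => W.μ P.1 δ δ'
  μ_symm := fun P δ δ' h => W.μ_symm P.1 δ δ' (fun e => h (Subtype.ext e))
  μ_pos := fun P δ δ' h => W.μ_pos P.1 δ δ' (fun e => h (Subtype.ext e))

/-- The restriction ω_a|_s of ω_a to the restricted combinatorics W°_s. -/
noncomputable def omegaRes (F : QuasiFiber W r) (a : Fin r → ZMod p) (s : Fin r) :
    (W.restrict F s).C → ZMod p :=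
  fun c => (F.m c.1 : ZMod p) * a s

end WeakComb

namespace WeakComb

variable {p : ℕ} (W : WeakComb p)

/-- The left-hand side of the resonance condition for `(α, β)` at the branch `δ`. -/
noncomputable def resLHS (α β : W.C → ZMod p) (P : W.S) (δ : W.Δ P) : ZMod p :=
  β (W.φ P δ) * (∑ j : W.C, (W.muC P δ j : ZMod p) * α j)
    - α (W.φ P δ) * (∑ j : W.C, (W.muC P δ j : ZMod p) * β j)

lemma muk_comm (P : W.S) (δ δ' : W.Δ P) : W.muk P δ δ' = W.muk P δ' δ := by
  unfold muk
  by_cases h : W.φ P δ = W.φ P δ'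
  · rw [if_pos h, if_pos h.symm]
  · rw [if_neg h, if_neg (Ne.symm h), W.μ_symm P δ δ' h]

lemma sum_muC_mul (P : W.S) (δ : W.Δ P) (α : W.C → ZMod p) :
    ∑ j : W.C, (W.muC P δ j : ZMod p) * α j
      = ∑ δ' : W.Δ P, (W.muk P δ δ' : ZMod p) * α (W.φ P δ') := by
  simp only [muC, Nat.cast_sum, Finset.sum_mul]
  rw [Finset.sum_comm]
  refine Finset.sum_congr rfl fun δ' _ => ?_
  rw [Finset.sum_eq_single (W.φ P δ')]
  · simp
  · intro j _ hj
    simp [hj.symm]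
  · simp

lemma resLHS_eq (α β : W.C → ZMod p) (P : W.S) (γ : W.Δ P) :
    W.resLHS α β P γ =
      ∑ δ : W.Δ P, α (W.φ P δ) * β (W.φ P γ) * (W.muk P δ γ : ZMod p)
        - ∑ δ : W.Δ P, α (W.φ P γ) * β (W.φ P δ) * (W.muk P γ δ : ZMod p) := by
  rw [resLHS, sum_muC_mul, sum_muC_mul, Finset.mul_sum, Finset.mul_sum]
  congr 1
  · refine Finset.sum_congr rfl fun δ _ => ?_
    rw [W.muk_comm P γ δ]
    ring
  · exact Finset.sum_congr rfl fun δ _ => by ring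

/-- Replacing each `ψ^δ ∧ ψ^δ'` in the `P`-component of `α ∧ β` by a difference `e δ' - e δ`
collects the resonance expressions as coefficients. -/
lemma sum_sum_smul_sub {M : Type*} [AddCommGroup M] [Module (ZMod p) M]
    (α β : W.C → ZMod p) (P : W.S) (e : W.Δ P → M) :
    ∑ δ : W.Δ P, ∑ δ' : W.Δ P,
        (α (W.φ P δ) * β (W.φ P δ') * (W.muk P δ δ' : ZMod p)) • (e δ' - e δ)
      = ∑ γ : W.Δ P, W.resLHS α β P γ • e γ := by
  simp only [resLHS_eq, smul_sub, sub_smul, Finset.sum_sub_distrib, Finset.sum_smul]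
  congr 1
  exact Finset.sum_comm

/-- The `ψ^γ`-coordinate of the boundary map `Λ² A_P → A_P`, written as the alternating form
`(v, w) ↦ (∑ v) * w γ - v γ * ∑ w`, a `2 × 2` determinant. -/
noncomputable def bdry (P : W.S) (γ : W.Δ P) :
    ⋀[ZMod p]^2 (W.Δ P → ZMod p) →ₗ[ZMod p] ZMod p :=
  exteriorPower.alternatingMapLinearEquiv
    ((Matrix.detRowAlternating (n := Fin 2) (R := ZMod p)).compLinearMap
      (LinearMap.pi ![∑ δ : W.Δ P, LinearMap.proj δ, LinearMap.proj γ]))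

lemma bdry_psiW (P : W.S) (γ δ δ' : W.Δ P) :
    W.bdry P γ (W.psiW P δ δ')
      = (Pi.single γ 1 : W.Δ P → ZMod p) δ' - (Pi.single γ 1 : W.Δ P → ZMod p) δ := by
  have h : W.psiW P δ δ' = exteriorPower.ιMulti (ZMod p) 2 ![W.psi P δ, W.psi P δ'] := rfl
  rw [h, bdry, exteriorPower.alternatingMapLinearEquiv_apply_ιMulti]
  rw [AlternatingMap.compLinearMap_apply]
  refine (Matrix.det_fin_two _).trans ?_
  simp [psi, Pi.single_apply, eq_comm]

/-- If `P` lies on at least two components, the boundary map kills `I_P`. -/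
lemma bdry_eq_zero_of_mem (P : W.S) (γ : W.Δ P)
    (hP : ¬ ∀ δ δ' : W.Δ P, W.φ P δ = W.φ P δ') :
    W.IP P ≤ LinearMap.ker (W.bdry P γ) := by
  refine Submodule.span_le.2 ?_
  rintro x (⟨δ1, δ2, δ3, rfl⟩ | ⟨h, -⟩)
  · simp only [SetLike.mem_coe, LinearMap.mem_ker, map_add, bdry_psiW]
    ring
  · exact absurd h hP

/-- The three-term relation, normalised at a base branch `δ₀`. -/
lemma mk_psiW_eq_sub (P : W.S) (δ₀ δ δ' : W.Δ P) :
    (Submodule.Quotient.mk (W.psiW P δ δ') : (⋀[ZMod p]^2 (W.Δ P → ZMod p)) ⧸ W.IP P)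
      = Submodule.Quotient.mk (W.psiW P δ₀ δ') - Submodule.Quotient.mk (W.psiW P δ₀ δ) := by
  have halt : W.psiW P δ' δ₀ = - W.psiW P δ₀ δ' := by
    have h := (exteriorPower.ιMulti (ZMod p) 2 (M := W.Δ P → ZMod p)).map_swap
      ![W.psi P δ₀, W.psi P δ'] (show (0 : Fin 2) ≠ 1 by decide)
    have hs : (![W.psi P δ₀, W.psi P δ'] ∘ Equiv.swap (0 : Fin 2) 1)
        = ![W.psi P δ', W.psi P δ₀] := by
      funext i
      fin_cases i <;> simp
    rw [hs] at h
    exact h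
  have hmem : W.psiW P δ₀ δ + W.psiW P δ δ' + W.psiW P δ' δ₀ ∈ W.IP P :=
    Submodule.subset_span (Or.inl ⟨δ₀, δ, δ', rfl⟩)
  rw [← Submodule.Quotient.mk_sub, Submodule.Quotient.eq]
  convert hmem using 1
  rw [halt]
  abel

lemma resLHS_eq_zero_of_wedge (d : W.C → ℕ) (α β : W.C → ZMod p)
    (h : W.wedge d α β = 0) (P : W.S) (γ : W.Δ P) : W.resLHS α β P γ = 0 := by
  by_cases hP : ∀ δ δ' : W.Δ P, W.φ P δ = W.φ P δ'
  · simp [resLHS_eq, muk, hP _ γ]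
  · have h1 := congrArg ((W.IP P).liftQ (W.bdry P γ) (W.bdry_eq_zero_of_mem P γ hP))
      (congrFun (congrArg Prod.fst h) P)
    simp only [wedge, map_sum, map_smul, Submodule.liftQ_apply, bdry_psiW, sum_sum_smul_sub,
      Prod.fst_zero, Pi.zero_apply, map_zero] at h1
    simpa [Pi.single_apply] using h1

lemma wedge_eq_zero_of_resLHS (d : W.C → ℕ) (α β : W.C → ZMod p) (hd : ∀ i, ¬ p ∣ d i)
    (h : ∀ (P : W.S) (γ : W.Δ P), W.resLHS α β P γ = 0) : W.wedge d α β = 0 := by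
  refine Prod.ext ?_ ?_
  · funext P
    rcases isEmpty_or_nonempty (W.Δ P) with hE | ⟨⟨δ₀⟩⟩
    · simp [wedge]
    · have hs := W.sum_sum_smul_sub α β P fun δ =>
        (Submodule.Quotient.mk (W.psiW P δ₀ δ) : (⋀[ZMod p]^2 (W.Δ P → ZMod p)) ⧸ W.IP P)
      simp only [← W.mk_psiW_eq_sub P δ₀, h, zero_smul, Finset.sum_const_zero] at hs
      exact hs
  · funext i
    exact absurd i.2 (hd i.1)

end WeakComb

section Statements

open WeakComb

variable {p : ℕ} [Fact p.Prime]

/-- Corollary `eq_det`. -/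
theorem stmt1 (W : WeakComb p) (d : W.C → ℕ) (hd : W.IsDegree d)
    (α β : W.C → ZMod p) :
    (W.wedge d α β = 0 → ∀ (P : W.S) (δ : W.Δ P), W.ResCond α β P δ) ∧
    ((∀ i : W.C, ¬ p ∣ d i) →
      (∀ (P : W.S) (δ : W.Δ P), W.ResCond α β P δ) → W.wedge d α β = 0) := by
  exact ⟨fun h P γ => W.resLHS_eq_zero_of_wedge d α β h P γ,
    fun hp h => W.wedge_eq_zero_of_resLHS d α β hp h⟩

end Statements
end

section
/- Let P ∈ S be an ordinary singular point: φ_P is injective on Δ_P with image {i_1,…,i_s} ⊆ C, where s = #Δ_P, and μ_P(δ,δ′) = 1 for all δ ≠ δ′ in Δ_P. Let ω₁ := Σ_{i∈C} σ_i and let β = Σβ_iσ_i ∈ A¹ satisfy ω₁∧β = 0 in A²_{W,k}. Then: if s ≢ 0 (mod p), β_{i_1} = β_{i_2} = … = β_{i_s}; and if s ≡ 0 (mod p), β_{i_1} + β_{i_2} + … + β_{i_s} = 0 in k. -/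
/-!
The product `ω₁ ∧ β` has the local component `Σ_{δ ≠ δ'} β_{φ(δ')} ψ^δ ∧ ψ^δ'` at the ordinary
point `P`. For each branch `δ₀`, the alternating form sending `ψ^δ ∧ ψ^δ'` to the
`δ₀`-coordinate of the boundary `ψ^δ - ψ^δ'` kills the relations `I_P`
(`WeakComb.IP_le_ker_boundaryForm`). Evaluating it on the local component gives
`Σ_δ β_{φ(δ)} = s · β_{φ(δ₀)}` for every `δ₀`, from which both claims follow: cancel `s` if it is
invertible in `ZMod p`, and otherwise the right-hand side is zero.
-/

open scoped Classical

section Statements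

open WeakComb

variable {p : ℕ} [Fact p.Prime]

namespace WeakComb

/-- The linear form on `Λ² A_P` induced by the alternating form
`(u, v) ↦ u_{δ₀} · ε(v) - ε(u) · v_{δ₀}`, where `ε` is the sum of the coordinates; it is encoded
as the determinant of the rows `(u_{δ₀}, ε(u))` and `(v_{δ₀}, ε(v))`. -/
noncomputable def boundaryForm (W : WeakComb p) (P : W.S) (δ₀ : W.Δ P) :
    ⋀[ZMod p]^2 (W.Δ P → ZMod p) →ₗ[ZMod p] ZMod p :=
  exteriorPower.alternatingMapLinearEquiv
    ((Matrix.detRowAlternating (n := Fin 2) (R := ZMod p)).compLinearMap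
      (LinearMap.pi ![LinearMap.proj δ₀, ∑ δ : W.Δ P, LinearMap.proj δ]))

/-- On basis elements `boundaryForm` is the `δ₀`-coordinate of the boundary `ψ^δ - ψ^δ'`. -/
lemma boundaryForm_psiW (W : WeakComb p) (P : W.S) (δ₀ δ δ' : W.Δ P) :
    W.boundaryForm P δ₀ (W.psiW P δ δ') =
      (if δ = δ₀ then 1 else 0) - (if δ' = δ₀ then 1 else 0) := by
  have hpsi : W.psiW P δ δ' = exteriorPower.ιMulti (ZMod p) 2 ![W.psi P δ, W.psi P δ'] := rfl
  rw [hpsi, boundaryForm, exteriorPower.alternatingMapLinearEquiv_apply_ιMulti]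
  rw [AlternatingMap.compLinearMap_apply]
  refine (Matrix.det_fin_two _).trans ?_
  simp [psi, Pi.single_apply, eq_comm]

/-- Boundaries of triangles vanish, and when all branches lie on one component the injectivity of
`φ_P` leaves at most one branch. -/
lemma IP_le_ker_boundaryForm (W : WeakComb p) (P : W.S) (hinj : Function.Injective (W.φ P))
    (δ₀ : W.Δ P) : W.IP P ≤ LinearMap.ker (W.boundaryForm P δ₀) := by
  refine Submodule.span_le.2 ?_
  rintro x (⟨δ1, δ2, δ3, rfl⟩ | ⟨hφ, δ1, δ2, rfl⟩)
  · simp [boundaryForm_psiW]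
  · simp [boundaryForm_psiW, hinj (hφ δ1 δ2)]

end WeakComb

/-- Proposition `ordinary_point`. -/
theorem stmt4 (W : WeakComb p) (d : W.C → ℕ) (hd : W.IsDegree d)
    (P : W.S) (hinj : Function.Injective (W.φ P))
    (hord : ∀ δ δ' : W.Δ P, δ ≠ δ' → W.μ P δ δ' = 1)
    (β : W.C → ZMod p)
    (h : W.wedge d (∑ i : W.C, W.sigma i) β = 0) :
    ((Fintype.card (W.Δ P) : ZMod p) ≠ 0 →
        ∀ δ δ' : W.Δ P, β (W.φ P δ) = β (W.φ P δ')) ∧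
    ((Fintype.card (W.Δ P) : ZMod p) = 0 →
        ∑ δ : W.Δ P, β (W.φ P δ) = 0) := by
  have hsum : ∀ δ₀ : W.Δ P,
      ∑ δ : W.Δ P, β (W.φ P δ) = (Fintype.card (W.Δ P) : ZMod p) * β (W.φ P δ₀) := by
    intro δ₀
    have hP := congrFun (congrArg Prod.fst h) P
    have hω : ∀ c : W.C, (∑ i : W.C, W.sigma i) c = 1 := by
      intro c
      simp [sigma, Finset.sum_apply, Pi.single_apply]
    have hf := congrArg
      ((W.IP P).liftQ (W.boundaryForm P δ₀) (W.IP_le_ker_boundaryForm P hinj δ₀)) hP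
    simp only [wedge, map_sum, map_smul, Submodule.liftQ_apply, boundaryForm_psiW, hω, one_mul,
      smul_eq_mul, Prod.fst_zero, Pi.zero_apply, map_zero] at hf
    -- The diagonal terms may be reinstated because the form vanishes on `ψ^δ ∧ ψ^δ`.
    have hterm : ∀ δ δ' : W.Δ P,
        β (W.φ P δ') * (W.muk P δ δ' : ZMod p) *
            ((if δ = δ₀ then 1 else 0) - (if δ' = δ₀ then 1 else 0)) =
          (if δ = δ₀ then β (W.φ P δ') else 0) - (if δ' = δ₀ then β (W.φ P δ') else 0) := by
      intro δ δ'
      by_cases hδ : δ = δ'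
      · subst hδ
        simp
      · rw [muk, if_neg (hinj.ne hδ), hord δ δ' hδ]
        simp [mul_sub]
    simp only [hterm, Finset.sum_sub_distrib] at hf
    rw [Finset.sum_comm] at hf
    simpa [sub_eq_zero] using hf
  refine ⟨fun hs δ δ' => mul_left_cancel₀ hs ((hsum δ).symm.trans (hsum δ')), fun hs => ?_⟩
  rcases isEmpty_or_nonempty (W.Δ P) with hE | ⟨⟨δ₀⟩⟩
  · simp
  · rw [hsum δ₀, hs, zero_mul]

end Statements
end

section
/- Let α ∈ A¹ be non-coordinate, let β ∈ A¹ satisfy the resonance condition for (α,β) at every branch of every point of S, and let π : C → C′ be a surjection. Say that β is π-proportional to α if for every class i′ ∈ C′ there exists λ_{i′} ∈ k with β_i = λ_{i′}·α_i for all i ∈ π^{-1}(i′). If β is π-proportional to α and W is p-transversal at some P ∈ S with respect to (α,π), with π(φ_P(Δ_P)) = {i′,j′}, then λ_{i′} = λ_{j′}; consequently β is π′-proportional to α, where π′ is the surjection obtained from π by the reduction step identifying i′ and j′. -/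
/-!
Let `δ` be the branch over the class of `c₀` that witnesses transversality, and put `i = φ δ`.
Regrouping by branches instead of components, the resonance condition at `δ` reads
`∑ δ', μ(δ,δ') (β_i α_{φ δ'} - α_i β_{φ δ'}) = 0`. If `β = l₀ α` on the class of `c₀` and
`β = l₁ α` on the class of `c₁`, the branches `δ'` over the class of `c₀` contribute nothing, and
the others contribute `(l₀ - l₁) α_i μ(δ,δ') α_{φ δ'}`. So the condition is
`(l₀ - l₁) α_i T = 0`, where `T ≠ 0` is the transversality sum and `α_i ≠ 0`, whence `l₀ = l₁`.

For the merged partition, note that for non-coordinate `α` proportionality means that the function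
`β / α` is constant on classes, i.e. that the partition is finer than the kernel of `β / α`
(`proportional_iff_le_ker`). A partition generated by relations lying in that kernel is finer
than it.
-/

open scoped Classical

section Statements

open WeakComb

variable {p : ℕ} [Fact p.Prime]

/-- The linear form of the resonance condition, regrouped as a sum over branches. -/
theorem sum_muC_mul (W : WeakComb p) (P : W.S) (δ : W.Δ P) (γ : W.C → ZMod p) :
    ∑ j : W.C, (W.muC P δ j : ZMod p) * γ j
      = ∑ δ' : W.Δ P, (W.muk P δ δ' : ZMod p) * γ (W.φ P δ') := by
  simp only [muC, Nat.cast_sum, Finset.sum_mul]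
  rw [Finset.sum_comm]
  refine Finset.sum_congr rfl fun δ' _ => ?_
  rw [Finset.sum_eq_single (W.φ P δ')]
  · simp
  · intro j _ hj
    simp [Ne.symm hj]
  · simp

/-- For non-coordinate `α`, proportionality along a partition means that `β / α` is constant on
its classes. -/
theorem proportional_iff_le_ker (W : WeakComb p) {α : W.C → ZMod p} (hnc : W.NonCoordinate α)
    (β : W.C → ZMod p) (s : Setoid W.C) :
    W.Proportional s α β ↔ s ≤ Setoid.ker (fun c => β c / α c) := by
  constructor
  · intro h a b hab
    obtain ⟨l, hl⟩ := h a
    change β a / α a = β b / α b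
    rw [hl a (s.refl a), hl b hab, mul_div_cancel_right₀ _ (hnc a),
      mul_div_cancel_right₀ _ (hnc b)]
  · intro h c
    refine ⟨β c / α c, fun c' hc => ?_⟩
    have e : β c / α c = β c' / α c' := h hc
    rw [e, div_mul_cancel₀ _ (hnc c')]

/-- At a transversal point, the resonance condition forces the two proportionality factors to
agree. -/
theorem factor_eq_of_transversal (W : WeakComb p) {α β : W.C → ZMod p} (hnc : W.NonCoordinate α)
    {s : Setoid W.C} {P : W.S} {c₀ c₁ : W.C} (hres : ∀ δ : W.Δ P, W.ResCond α β P δ)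
    (ht : W.PTransversalAt α s P c₀ c₁) {l₀ l₁ : ZMod p}
    (h₀ : ∀ c, s.r c₀ c → β c = l₀ * α c) (h₁ : ∀ c, s.r c₁ c → β c = l₁ * α c) :
    l₀ = l₁ := by
  obtain ⟨-, hcover, -, -, δ, hδ, hT⟩ := ht
  have hr := hres δ
  rw [ResCond, sum_muC_mul, sum_muC_mul] at hr
  have key : (l₀ - l₁) * α (W.φ P δ) *
      (∑ δ' : W.Δ P, if s.r (W.φ P δ') c₁
        then (W.muk P δ δ' : ZMod p) * α (W.φ P δ') else 0) = 0 := by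
    refine Eq.trans ?_ hr
    rw [Finset.mul_sum, Finset.mul_sum, Finset.mul_sum, ← Finset.sum_sub_distrib]
    refine Finset.sum_congr rfl fun δ' _ => ?_
    rw [h₀ _ (s.symm hδ)]
    by_cases hc : s.r (W.φ P δ') c₁
    · rw [if_pos hc, h₁ _ (s.symm hc)]
      ring
    · rw [if_neg hc, h₀ _ (s.symm ((hcover δ').resolve_right hc))]
      ring
  have h := (mul_eq_zero.mp key).resolve_right hT
  exact sub_eq_zero.mp ((mul_eq_zero.mp h).resolve_right (hnc _))

/-- inductive step in the proof of Proposition `completelypreductive`. -/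
theorem stmt7 (W : WeakComb p)
    (α : W.C → ZMod p) (hnc : W.NonCoordinate α)
    (β : W.C → ZMod p) (hres : ∀ (P : W.S) (δ : W.Δ P), W.ResCond α β P δ)
    (s : Setoid W.C) (hprop : W.Proportional s α β)
    (P : W.S) (c₀ c₁ : W.C) (ht : W.PTransversalAt α s P c₀ c₁) :
    (∀ l₀ l₁ : ZMod p,
      (∀ c, s.r c₀ c → β c = l₀ * α c) →
      (∀ c, s.r c₁ c → β c = l₁ * α c) → l₀ = l₁) ∧
    W.Proportional (mergeSetoid s c₀ c₁) α β := by
  have hfac : ∀ l₀ l₁ : ZMod p,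
      (∀ c, s.r c₀ c → β c = l₀ * α c) →
      (∀ c, s.r c₁ c → β c = l₁ * α c) → l₀ = l₁ :=
    fun _ _ h₀ h₁ => factor_eq_of_transversal W hnc (hres P) ht h₀ h₁
  refine ⟨hfac, (proportional_iff_le_ker W hnc β _).mpr (Setoid.eqvGen_le ?_)⟩
  rintro a b (hab | ⟨rfl, rfl⟩)
  · exact (proportional_iff_le_ker W hnc β s).mp hprop hab
  · obtain ⟨l₀, h₀⟩ := hprop a
    obtain ⟨l₁, h₁⟩ := hprop b
    change β a / α a = β b / α b
    rw [h₀ a (s.refl a), h₁ b (s.refl b), mul_div_cancel_right₀ _ (hnc a),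
      mul_div_cancel_right₀ _ (hnc b), hfac l₀ l₁ h₀ h₁]

end Statements
end

section
/- Suppose there is a surjection g : C → {1,…,r} with r ≥ 3 such that for every P ∈ S, the set g(φ_P(Δ_P)) is either a singleton or equals all of {1,…,r}. Then W is not completely p-reductive with respect to any α ∈ A¹. (This is the combinatorial form of: a plane curve that is the union of r ≥ 3 fibers of a pencil of curves is not completely p-reductive for any prime p.) -/
/-!
The invariant is that every partition reached by reduction steps refines the partition of the
components into fibers of `g`. It holds for the discrete partition. At a transversal point `P` of
such a partition the branches meet only two classes, so `g` takes at most two values at `P`; since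
`r ≥ 3`, `g` is constant at `P`, and the two merged classes lie in the same fiber of `g`.
The one-class partition does not refine the fibers of `g`, because `g` takes at least two values.
-/

open scoped Classical

section Statements

open WeakComb

variable {p : ℕ} [Fact p.Prime]

/-- A reduction step preserves refinement of the fibers of `g`. -/
theorem redStep_le_ker (W : WeakComb p) (r : ℕ) (hr : 3 ≤ r) (g : W.C → Fin r)
    (hpencil : ∀ P : W.S,
      (∀ δ δ' : W.Δ P, g (W.φ P δ) = g (W.φ P δ')) ∨
      (∀ s : Fin r, ∃ δ : W.Δ P, g (W.φ P δ) = s))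
    (α : W.C → ZMod p) (s s' : Setoid W.C) (hstep : W.RedStep α s s')
    (hs : ∀ a b, s.r a b → g a = g b) : ∀ a b, s'.r a b → g a = g b := by
  obtain ⟨P, c₀, c₁, ⟨-, hall, ⟨δ₀, h₀⟩, ⟨δ₁, h₁⟩, -⟩, rfl⟩ := hstep
  have hc : g c₀ = g c₁ := by
    rcases hpencil P with h | h
    · rw [← hs _ _ h₀, ← hs _ _ h₁]
      exact h _ _
    · -- all `r ≥ 3` values would have to lie in `{g c₀, g c₁}`
      exfalso
      have hsub : (Finset.univ : Finset (Fin r)) ⊆ {g c₀, g c₁} := by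
        intro t _
        obtain ⟨δ, rfl⟩ := h t
        rcases hall δ with hδ | hδ <;> simp [hs _ _ hδ]
      have hcard := (Finset.card_le_card hsub).trans Finset.card_le_two
      rw [Finset.card_univ, Fintype.card_fin] at hcard
      omega
  intro a b hab
  have hab' : Relation.EqvGen (fun a b => s.r a b ∨ (a = c₀ ∧ b = c₁)) a b := hab
  induction hab' with
  | rel x y h =>
    rcases h with h | ⟨rfl, rfl⟩
    · exact hs _ _ h
    · exact hc
  | refl x => rfl
  | symm x y h ih => exact (ih h).symm
  | trans x y z h h' ih ih' => exact (ih h).trans (ih' h')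

/-- unions of at least three fibers of a pencil are never
completely p-reductive. -/
theorem stmt9 (W : WeakComb p) (r : ℕ) (hr : 3 ≤ r)
    (g : W.C → Fin r) (hg : Function.Surjective g)
    (hpencil : ∀ P : W.S,
      (∀ δ δ' : W.Δ P, g (W.φ P δ) = g (W.φ P δ')) ∨
      (∀ s : Fin r, ∃ δ : W.Δ P, g (W.φ P δ) = s)) :
    ∀ α : W.C → ZMod p, ¬ W.CompletelyPReductive α := by
  intro α hred
  have hinv : ∀ s, Relation.ReflTransGen (W.RedStep α) ⊥ s → ∀ a b, s.r a b → g a = g b := by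
    intro s h
    induction h with
    | refl => exact fun a b hab => congrArg g hab
    | tail _ hstep ih => exact redStep_le_ker W r hr g hpencil α _ _ hstep ih
  obtain ⟨a, ha⟩ := hg ⟨0, by omega⟩
  obtain ⟨b, hb⟩ := hg ⟨1, by omega⟩
  have hab := hinv ⊤ hred a b trivial
  rw [ha, hb] at hab
  simp at hab

end Statements
end

section
/- Let W carry a degree assignment (d_c)_{c∈C} and a combinatorial quasi-fiber structure (g, (m_c), B) of rank r. Assume: (a) for every P ∈ B and every δ ∈ Δ_P there exists μ_δ ∈ k such that M_s(δ) = μ_δ for every s ∈ {1,…,r} with s ≠ g(φ_P(δ)); (b) there exists D ∈ k with Σ_{c∈g^{-1}(s)} d_c·m_c = D in k for every s ∈ {1,…,r}. Then for all a,b ∈ k^r with Σ_{s=1}^r a_s = 0 and Σ_{s=1}^r b_s = 0, one has ω_a ∧ ω_b = 0 in A²_{W,k}. Moreover, if for each s ∈ {1,…,r} there exists c ∈ g^{-1}(s) with p ∤ m_c, then for every a ∈ k^r with Σ_s a_s = 0, dim_k H¹(A*_{W,k}, ·∧ω_a) ≥ r − 2. (Combinatorial form of Theorem 'fibered', part 1.)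 -/
/-!
At a point `P` the relations in `I_P` give `[ψ^δ ∧ ψ^δ'] = e δ' - e δ`, where `e δ = [ψ^δ₀ ∧ ψ^δ]`
for a fixed branch `δ₀`. By symmetry of the multiplicities, the component of `α ∧ β` at `P` is then
the sum over the branches `δ` of `e δ` times
`β_δ Σ_δ' μ(δ,δ') α_δ' - α_δ Σ_δ' μ(δ,δ') β_δ'` (`wedge_fst_eq_zero`), so it vanishes as soon as
all these coefficients do. For `α = ω_a` with `Σ a_s = 0`, hypothesis (a) yields
`Σ_δ' μ(δ,δ') α_δ' = a_{g(δ)} K` with `K` independent of `a` (`sum_muk_omega`), and the coefficients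
for `α = ω_a`, `β = ω_b` cancel. The part at infinity vanishes because
`Σ_c d_c (ω_a)_c = D Σ_s a_s = 0`.

For the dimension bound, `b ↦ ω_b` is injective when every fibre has a multiplicity prime to `p`;
it embeds the hyperplane `Σ b_s = 0`, of dimension at least `r - 1`, into the kernel of `· ∧ ω_a`,
and passing to the quotient by the line `k ω_a` loses at most one dimension.
-/


open scoped Classical

namespace WeakComb

variable {p : ℕ} (W : WeakComb p) {r : ℕ}

lemma psiW_self (P : W.S) (δ : W.Δ P) : W.psiW P δ δ = 0 := by
  apply Subtype.ext
  exact (ExteriorAlgebra.ιMulti (ZMod p) 2).map_eq_zero_of_eq _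
    (i := 0) (j := 1) (by simp) (by simp)

lemma mk_psiW_cycle (P : W.S) (x y z : W.Δ P) :
    (Submodule.Quotient.mk (W.psiW P x y) : _ ⧸ W.IP P) + Submodule.Quotient.mk (W.psiW P y z)
      + Submodule.Quotient.mk (W.psiW P z x) = 0 := by
  rw [← Submodule.Quotient.mk_add, ← Submodule.Quotient.mk_add, Submodule.Quotient.mk_eq_zero]
  exact Submodule.subset_span (Or.inl ⟨x, y, z, rfl⟩)

/-- Modulo `I_P`, every `ψ^x ∧ ψ^y` is a difference of the classes `ψ^o ∧ ψ^·` for a fixed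
branch `o`. -/
lemma mk_psiW_eq_sub_s10 (P : W.S) (o x y : W.Δ P) :
    (Submodule.Quotient.mk (W.psiW P x y) : _ ⧸ W.IP P) =
      Submodule.Quotient.mk (W.psiW P o y) - Submodule.Quotient.mk (W.psiW P o x) := by
  have h := W.mk_psiW_cycle P o x y
  -- The degenerate cycle `(o, y, y)` is antisymmetry.
  have h' := W.mk_psiW_cycle P o y y
  rw [psiW_self, Submodule.Quotient.mk_zero, add_zero] at h'
  rw [eq_neg_of_add_eq_zero_left h']
  rw [add_assoc] at h
  rw [eq_neg_of_add_eq_zero_left h]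
  abel

lemma muk_symm (P : W.S) (x y : W.Δ P) : W.muk P x y = W.muk P y x := by
  unfold muk
  by_cases h : W.φ P x = W.φ P y
  · simp [h]
  · rw [if_neg h, if_neg (Ne.symm h), W.μ_symm P x y h]

/-- The resonance equations at the branches of `P` force the component of `α ∧ β` at `P` to
vanish. -/
lemma wedge_fst_eq_zero (d : W.C → ℕ) (α β : W.C → ZMod p) (P : W.S)
    (h : ∀ x : W.Δ P,
      β (W.φ P x) * (∑ y, (W.muk P x y : ZMod p) * α (W.φ P y)) =
        α (W.φ P x) * ∑ y, (W.muk P x y : ZMod p) * β (W.φ P y)) :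
    (W.wedge d α β).1 P = 0 := by
  rcases isEmpty_or_nonempty (W.Δ P) with hE | ⟨⟨o⟩⟩
  · simp [wedge]
  · obtain ⟨e, he⟩ : ∃ e : W.Δ P → _ ⧸ W.IP P, ∀ x y,
        Submodule.Quotient.mk (W.psiW P x y) = e y - e x := ⟨_, W.mk_psiW_eq_sub_s10 P o⟩
    simp only [wedge]
    simp_rw [he, smul_sub, Finset.sum_sub_distrib, ← Finset.sum_smul]
    rw [Finset.sum_comm, ← Finset.sum_sub_distrib]
    refine Finset.sum_eq_zero fun x _ => ?_
    rw [← Finset.sum_smul, ← sub_smul]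
    refine smul_eq_zero_of_left (sub_eq_zero.mpr ?_) _
    calc ∑ y, α (W.φ P y) * β (W.φ P x) * (W.muk P y x : ZMod p)
        = β (W.φ P x) * (∑ y, (W.muk P x y : ZMod p) * α (W.φ P y)) := by
          rw [Finset.mul_sum]
          refine Finset.sum_congr rfl fun y _ => ?_
          rw [W.muk_symm P y x]; ring
      _ = _ := by
          rw [h, Finset.mul_sum]
          refine Finset.sum_congr rfl fun y _ => ?_
          ring

lemma sum_muk_omega_eq (F : QuasiFiber W r) (a : Fin r → ZMod p) (P : W.S) (x : W.Δ P) :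
    ∑ y, (W.muk P x y : ZMod p) * W.omega F a (W.φ P y) = ∑ s, a s * W.Mcoef F P x s := by
  simp_rw [Mcoef, Finset.mul_sum]
  rw [Finset.sum_comm]
  refine Finset.sum_congr rfl fun y _ => ?_
  rw [Finset.sum_eq_single (F.g (W.φ P y))]
  · by_cases h : W.φ P x = W.φ P y
    · simp [muk, h]
    · simp [muk, h, Ne.symm h, omega]; ring
  · intro s _ hs
    simp [Ne.symm hs]
  · simp

/-- If the `M_s(x)` with `s ≠ g(x)` agree, then pairing `x` with `ω_a`, for `a` of sum zero, gives
`a_{g(x)}` times a constant that does not depend on `a`. -/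
lemma sum_muk_omega (F : QuasiFiber W r) (P : W.S) (x : W.Δ P) (μx : ZMod p)
    (hμ : ∀ s, s ≠ F.g (W.φ P x) → W.Mcoef F P x s = μx)
    (a : Fin r → ZMod p) (h : ∑ s, a s = 0) :
    ∑ y, (W.muk P x y : ZMod p) * W.omega F a (W.φ P y) =
      a (F.g (W.φ P x)) * (W.Mcoef F P x (F.g (W.φ P x)) - μx) := by
  have h1 : ∑ s, a s * W.Mcoef F P x s = ∑ s, a s * (W.Mcoef F P x s - μx) := by
    simp_rw [mul_sub, Finset.sum_sub_distrib, ← Finset.sum_mul, h]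
    simp
  rw [sum_muk_omega_eq, h1]
  refine Finset.sum_eq_single _ (fun s _ hs => ?_) (by simp)
  rw [hμ s hs]; simp

/-- Off the base points the hypothesis on the `M_s` holds with value `0`. -/
lemma Mcoef_eq_zero (F : QuasiFiber W r) (P : W.S) (hP : P ∉ F.B) (x : W.Δ P)
    (s : Fin r) (hs : s ≠ F.g (W.φ P x)) : W.Mcoef F P x s = 0 := by
  refine Finset.sum_eq_zero fun y _ => if_neg fun h => hs ?_
  rw [← h.2]; exact F.fiber_off_base P hP y x

lemma sum_degree_omega (F : QuasiFiber W r) (d : W.C → ℕ) (D : ZMod p)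
    (hD : ∀ s : Fin r,
      (∑ c : W.C, if F.g c = s then ((d c * F.m c : ℕ) : ZMod p) else 0) = D)
    (a : Fin r → ZMod p) (h : ∑ s, a s = 0) :
    ∑ c, (d c : ZMod p) * W.omega F a c = 0 := by
  calc ∑ c, (d c : ZMod p) * W.omega F a c
      = ∑ c, ∑ s, a s * (if F.g c = s then ((d c * F.m c : ℕ) : ZMod p) else 0) := by
        refine Finset.sum_congr rfl fun c _ => ?_
        simp [omega]; ring
    _ = ∑ s, a s * D := by
        rw [Finset.sum_comm]
        simp_rw [← Finset.mul_sum, hD]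
    _ = 0 := by rw [← Finset.sum_mul, h, zero_mul]

/-- The linear map `b ↦ ω_b`. -/
noncomputable def omegaL (F : QuasiFiber W r) : (Fin r → ZMod p) →ₗ[ZMod p] (W.C → ZMod p) where
  toFun := W.omega F
  map_add' a b := by funext c; simp [omega, mul_add]
  map_smul' t a := by funext c; simp [omega]; ring

lemma omegaL_injective [Fact p.Prime] (F : QuasiFiber W r)
    (h : ∀ s : Fin r, ∃ c : W.C, F.g c = s ∧ ¬ p ∣ F.m c) :
    Function.Injective (W.omegaL F) := by
  rw [injective_iff_map_eq_zero]
  intro a ha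
  funext s
  obtain ⟨c, rfl, hc⟩ := h s
  have h0 : (F.m c : ZMod p) * a (F.g c) = 0 := congrFun ha c
  refine (mul_eq_zero.mp h0).resolve_left fun h1 => hc ?_
  exact (ZMod.natCast_eq_zero_iff _ _).mp h1

/-- A `k`-dimensional family in the kernel of `· ∧ α` contributes at least `k - 1` to `H¹`. -/
lemma le_finrank_H1 [Fact p.Prime] (d : W.C → ℕ) (α : W.C → ZMod p)
    (V : Submodule (ZMod p) (W.C → ZMod p)) (hV : V ≤ W.wedgeKer d α) :
    Module.finrank (ZMod p) V - 1 ≤ Module.finrank (ZMod p) (W.H1 d α) := by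
  have h1 := Submodule.finrank_quotient_add_finrank
    (Submodule.comap (W.wedgeKer d α).subtype (Submodule.span (ZMod p) {α}))
  have h2 : Module.finrank (ZMod p)
      (Submodule.comap (W.wedgeKer d α).subtype (Submodule.span (ZMod p) {α})) ≤ 1 := by
    rw [(Submodule.equivMapOfInjective _ (W.wedgeKer d α).subtype_injective _).finrank_eq]
    refine (Submodule.finrank_mono (Submodule.map_comap_le _ _)).trans ?_
    simpa using finrank_span_le_card (R := ZMod p) ({α} : Set (W.C → ZMod p))
  have h3 := Submodule.finrank_mono hV
  change Module.finrank (ZMod p) (W.H1 d α) + _ = _ at h1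
  omega

/-- The hyperplane of vectors with coordinate sum zero. -/
noncomputable def sumZero (p r : ℕ) : Submodule (ZMod p) (Fin r → ZMod p) :=
  LinearMap.ker (∑ s, LinearMap.proj s : (Fin r → ZMod p) →ₗ[ZMod p] ZMod p)

lemma mem_sumZero (b : Fin r → ZMod p) : b ∈ sumZero p r ↔ ∑ s, b s = 0 := by
  simp [sumZero, LinearMap.mem_ker]

lemma le_finrank_sumZero [Fact p.Prime] :
    r - 1 ≤ Module.finrank (ZMod p) (sumZero p r) := by
  have h := LinearMap.finrank_range_add_finrank_ker
    (∑ s, LinearMap.proj s : (Fin r → ZMod p) →ₗ[ZMod p] ZMod p)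
  have h' := Submodule.finrank_le (LinearMap.range
    (∑ s, LinearMap.proj s : (Fin r → ZMod p) →ₗ[ZMod p] ZMod p))
  rw [Module.finrank_self] at h'
  rw [Module.finrank_fin_fun] at h
  unfold sumZero
  omega

end WeakComb

section Statements

open WeakComb

variable {p : ℕ} [Fact p.Prime]

/-- Theorem `fibered`, part 1. -/
theorem stmt10 (W : WeakComb p) (d : W.C → ℕ) (hd : W.IsDegree d)
    {r : ℕ} (F : QuasiFiber W r)
    (ha : ∀ P ∈ F.B, ∀ δ : W.Δ P, ∃ μδ : ZMod p,
      ∀ s : Fin r, s ≠ F.g (W.φ P δ) → W.Mcoef F P δ s = μδ)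
    (hb : ∃ D : ZMod p, ∀ s : Fin r,
      (∑ c : W.C, if F.g c = s then ((d c * F.m c : ℕ) : ZMod p) else 0) = D) :
    (∀ a b : Fin r → ZMod p, (∑ s, a s) = 0 → (∑ s, b s) = 0 →
      W.wedge d (W.omega F a) (W.omega F b) = 0) ∧
    ((∀ s : Fin r, ∃ c : W.C, F.g c = s ∧ ¬ p ∣ F.m c) →
      ∀ a : Fin r → ZMod p, (∑ s, a s) = 0 →
        r - 2 ≤ Module.finrank (ZMod p) (W.H1 d (W.omega F a))) := by
  have main : ∀ a b : Fin r → ZMod p, (∑ s, a s) = 0 → (∑ s, b s) = 0 →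
      W.wedge d (W.omega F a) (W.omega F b) = 0 := by
    intro a b h1 h2
    refine Prod.ext (funext fun P => ?_) (funext fun i => ?_)
    · refine W.wedge_fst_eq_zero d _ _ P fun x => ?_
      obtain ⟨μx, hμ⟩ : ∃ μx : ZMod p, ∀ s, s ≠ F.g (W.φ P x) → W.Mcoef F P x s = μx := by
        by_cases hP : P ∈ F.B
        · exact ha P hP x
        · exact ⟨0, W.Mcoef_eq_zero F P hP x⟩
      rw [W.sum_muk_omega F P x μx hμ a h1, W.sum_muk_omega F P x μx hμ b h2]
      simp only [omega]
      ring
    · obtain ⟨D, hD⟩ := hb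
      simp [wedge, W.sum_degree_omega F d D hD a h1, W.sum_degree_omega F d D hD b h2]
  refine ⟨main, fun hm a h1 => ?_⟩
  have hV : (sumZero p r).map (W.omegaL F) ≤ W.wedgeKer d (W.omega F a) := by
    rintro _ ⟨b, hb', rfl⟩
    exact LinearMap.mem_ker.mpr (main b a ((mem_sumZero b).mp hb') h1)
  have h2 := W.le_finrank_H1 d _ _ hV
  rw [← (Submodule.equivMapOfInjective _ (W.omegaL_injective F hm) _).finrank_eq] at h2
  have h3 := le_finrank_sumZero (p := p) (r := r)
  omega

end Statements
end
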